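/- Let q be a prime power, n ≥ 2, and let ℓ ∈ N with 2 ≤ ℓ < q. Let g ∈ F_q[x_1,…,x_{n-1}] be a polynomial of degree ℓ. For ρ ∈ F_q and a ∈ F_q^n, let C = {a + ρ·(λ, g(λ)) : λ ∈ F_q^{n-1}} ⊆ F_q^n. Let k, D, M ∈ N satisfy ℓ(D - w) < (M - w)q for all integers w with 0 ≤ w < k. Suppose P ∈ F_q[x_1,…,x_n] is a nonzero polynomial of degree at most D vanishing on C with multiplicity M. Then for every β ∈ Z_{≥0}^n with |β| < k, the polynomial P_{β,ρ}(s) := P^{(β)}(a + ρ·(s, g(s))) ∈ F_q[s_1,…,s_{n-1}] is the zero polynomial. -/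

import Mathlib

open MvPolynomial

/-- The β-th Hasse derivative of a multivariate polynomial `P`: the coefficient of `y^β`
in `P(x + y)`, where the outer variables are `y` and the coefficients are polynomials in `x`. -/
noncomputable def hasseDeriv {F : Type*} [CommRing F] {n : ℕ}
    (β : Fin n →₀ ℕ) (P : MvPolynomial (Fin n) F) : MvPolynomial (Fin n) F :=
  MvPolynomial.coeff β
    (MvPolynomial.eval₂ ((MvPolynomial.C).comp (MvPolynomial.C))
      (fun i => MvPolynomial.C (MvPolynomial.X i) + MvPolynomial.X i) P)

/-- The multiplicity of `P` at a point `a`: the largest `M` such that all Hasse derivatives of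
order `< M` vanish at `a` (`∞` if no largest such `M` exists). -/
noncomputable def mult {F : Type*} [CommRing F] {n : ℕ}
    (P : MvPolynomial (Fin n) F) (a : Fin n → F) : ℕ∞ :=
  sSup {M : ℕ∞ | ∀ β : Fin n →₀ ℕ, ((∑ i, β i : ℕ) : ℕ∞) < M →
    MvPolynomial.eval a (hasseDeriv β P) = 0}

/-- The maximal ideal of a point. -/
noncomputable def ptIdeal {F : Type*} [Field F] {σ : Type*} (a : σ → F) :
    Ideal (MvPolynomial σ F) := RingHom.ker (MvPolynomial.eval a)

theorem mem_ptIdeal {F : Type*} [Field F] {σ : Type*} (a : σ → F) (P : MvPolynomial σ F) :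
    P ∈ ptIdeal a ↔ MvPolynomial.eval a P = 0 := by
  simp [ptIdeal, RingHom.mem_ker]

theorem taylor_coeff_mem_pow {F : Type*} [Field F] {N : ℕ} (a : Fin N → F) (c : F) (m : ℕ) :
    ∀ R ∈ (ptIdeal (Fin.cons c a : Fin (N + 1) → F)) ^ m, ∀ j : ℕ,
      (Polynomial.taylor (C c) (finSuccEquiv F N R)).coeff j ∈ (ptIdeal a) ^ (m - j) := by
  induction m with
  | zero => intro R _ j; simp
  | succ m ih =>
    intro R hR
    rw [pow_succ] at hR
    induction hR using Submodule.mul_induction_on' with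
    | mem_mul_mem x hx y hy =>
      intro j
      rw [map_mul, Polynomial.taylor_mul, Polynomial.coeff_mul]
      refine Ideal.sum_mem _ ?_
      rintro ⟨u, v⟩ huv
      rw [Finset.HasAntidiagonal.mem_antidiagonal] at huv
      simp only at huv ⊢
      have h1 := ih x hx u
      by_cases hv : v = 0
      · subst hv
        have h2 : (Polynomial.taylor (C c) (finSuccEquiv F N y)).coeff 0 ∈ ptIdeal a := by
          rw [mem_ptIdeal] at hy ⊢
          rw [Polynomial.taylor_coeff_zero]
          rw [eval_eq_eval_mv_eval', Polynomial.eval_map] at hy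
          have h5 := Polynomial.hom_eval₂ (finSuccEquiv F N y) (RingHom.id _) (eval a) (C c)
          rw [eval_C, RingHom.comp_id, hy] at h5
          exact h5
        have h3 := Ideal.mul_mem_mul h1 h2
        rw [← pow_succ] at h3
        exact Ideal.pow_le_pow_right (by omega) h3
      · exact Ideal.pow_le_pow_right (by omega) (Ideal.mul_mem_right _ _ h1)
    | add x _ y _ hx hy =>
      intro j
      rw [map_add, map_add, Polynomial.coeff_add]
      exact Ideal.add_mem _ (hx j) (hy j)

theorem exists_lin_poly {F A : Type*} [Field F] [CommRing A] [Algebra F A] (L : A →ₗ[F] F)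
    (p : Polynomial A) : ∃ P : Polynomial F, ∀ j, P.coeff j = L (p.coeff j) := by
  refine ⟨∑ j ∈ Finset.range (p.natDegree + 1), Polynomial.monomial j (L (p.coeff j)), ?_⟩
  intro j
  rw [Polynomial.finsetSum_coeff]
  simp only [Polynomial.coeff_monomial]
  rw [Finset.sum_ite_eq']
  split_ifs with h
  · rfl
  · rw [Polynomial.coeff_eq_zero_of_natDegree_lt (by simpa using h), map_zero]

theorem lin_taylor {F A : Type*} [Field F] [CommRing A] [Algebra F A] (L : A →ₗ[F] F)
    (p : Polynomial A) (P : Polynomial F) (h : ∀ j, P.coeff j = L (p.coeff j)) (c : F) (k : ℕ) :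
    (Polynomial.taylor c P).coeff k = L ((Polynomial.taylor (algebraMap F A c) p).coeff k) := by
  rw [Polynomial.taylor_coeff, Polynomial.taylor_coeff]
  set n := max (Polynomial.hasseDeriv k P).natDegree (Polynomial.hasseDeriv k p).natDegree + 1
  rw [Polynomial.eval_eq_sum_range' (n := n) (by omega),
    Polynomial.eval_eq_sum_range' (n := n) (by omega), map_sum]
  refine Finset.sum_congr rfl fun i _ => ?_
  rw [Polynomial.hasseDeriv_coeff, Polynomial.hasseDeriv_coeff, h, ← map_pow, mul_comm _ (algebraMap F A _),
    ← Algebra.smul_def, map_smul, ← nsmul_eq_mul, ← nsmul_eq_mul, map_nsmul, smul_eq_mul, mul_comm]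

theorem card_mul_le_natDegree {F : Type*} [Field F] [Fintype F] (P : Polynomial F) (hP : P ≠ 0)
    (e : ℕ) (h : ∀ c : F, ∀ j < e, (Polynomial.taylor c P).coeff j = 0) :
    e * Fintype.card F ≤ P.natDegree := by
  have hd : (∏ c : F, (Polynomial.X - Polynomial.C c) ^ e) ∣ P := by
    apply Finset.prod_dvd_of_coprime
    · intro c _ d _ hcd
      exact (Polynomial.pairwise_coprime_X_sub_C Function.injective_id hcd).pow
    · intro c _
      rw [Polynomial.X_sub_C_pow_dvd_iff, Polynomial.X_pow_dvd_iff]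
      exact h c
  have := Polynomial.natDegree_le_of_dvd hd hP
  rw [Polynomial.natDegree_prod _ _ (fun c _ => pow_ne_zero _ (Polynomial.X_sub_C_ne_zero c))] at this
  simp at this
  rwa [mul_comm]

/-- Schwartz-Zippel with multiplicity on the full grid. -/
theorem mult_SZ {F : Type*} [Field F] [Fintype F] (N : ℕ) : ∀ (m : ℕ) (R : MvPolynomial (Fin N) F),
    R ≠ 0 → (∀ a : Fin N → F, R ∈ (ptIdeal a) ^ m) → m * Fintype.card F ≤ R.totalDegree := by
  induction N with
  | zero =>
    intro m R hR h
    rcases Nat.eq_zero_or_pos m with rfl | hm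
    · simp
    · exfalso
      have h1 := Ideal.pow_le_self hm.ne' (h 0)
      rw [mem_ptIdeal] at h1
      apply hR
      rw [eq_C_of_isEmpty R] at h1 ⊢
      rw [eval_C] at h1
      rw [h1, C_0]
  | succ N ih =>
    intro m R hR h
    set p := finSuccEquiv F N R with hp
    have hp0 : p ≠ 0 := by simpa [hp] using hR
    set Q := p.leadingCoeff with hQ
    have hQ0 : Q ≠ 0 := Polynomial.leadingCoeff_ne_zero.mpr hp0
    have hdeg : Q.totalDegree + p.natDegree ≤ R.totalDegree :=
      totalDegree_coeff_finSuccEquiv_add_le R _ hQ0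
    by_cases hall : ∀ a : Fin N → F, Q ∈ (ptIdeal a) ^ m
    · have := ih m Q hQ0 hall
      omega
    · classical
      have hex : ∃ m, ¬ ∀ a : Fin N → F, Q ∈ (ptIdeal a) ^ m := ⟨m, hall⟩
      obtain ⟨μ, hμ⟩ : ∃ μ, Nat.find hex = μ + 1 := by
        refine Nat.exists_eq_succ_of_ne_zero ?_
        intro h0
        have := Nat.find_spec hex
        rw [h0] at this
        simp at this
      have hs := Nat.find_spec hex
      have hle : Nat.find hex ≤ m := Nat.find_min' hex hall
      have hlt := Nat.find_min hex (m := μ) (by omega)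
      rw [not_not] at hlt
      have hμdeg := ih μ Q hQ0 hlt
      rw [hμ] at hs hle
      push Not at hs
      obtain ⟨a, ha⟩ := hs
      obtain ⟨L, hL1, hL2⟩ := Submodule.exists_le_ker_of_notMem (K := F)
        (p := ((ptIdeal a) ^ (μ + 1)).restrictScalars F) (v := Q) (by simpa using ha)
      obtain ⟨P, hP⟩ := exists_lin_poly L p
      have hPt : P.coeff p.natDegree ≠ 0 := by rw [hP]; exact hL1
      have hP0 : P ≠ 0 := by rintro rfl; simp at hPt
      have hPd : P.natDegree ≤ p.natDegree := by
        rw [Polynomial.natDegree_le_iff_coeff_eq_zero]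
        intro j hj
        rw [hP, Polynomial.coeff_eq_zero_of_natDegree_lt hj, map_zero]
      have := card_mul_le_natDegree P hP0 (m - μ) (by
        intro c j hj
        rw [lin_taylor L p P hP]
        have h1 := taylor_coeff_mem_pow a c m R (h _) j
        have h2 := Ideal.pow_le_pow_right (show μ + 1 ≤ m - j by omega) h1
        exact hL2 h2)
      have e : m * Fintype.card F = (m - μ) * Fintype.card F + μ * Fintype.card F := by
        rw [← add_mul]; congr 1; omega
      omega

/-- The ring hom `P(x) ↦ P(x+y)`. -/
noncomputable def shiftHom (F : Type*) [Field F] (n : ℕ) :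
    MvPolynomial (Fin n) F →+* MvPolynomial (Fin n) (MvPolynomial (Fin n) F) :=
  MvPolynomial.eval₂Hom ((MvPolynomial.C).comp (MvPolynomial.C))
      (fun i => MvPolynomial.C (MvPolynomial.X i) + MvPolynomial.X i)

theorem hasseDeriv_eq {F : Type*} [Field F] {n : ℕ} (β : Fin n →₀ ℕ) (P : MvPolynomial (Fin n) F) :
    hasseDeriv β P = coeff β (shiftHom F n P) := rfl

theorem hasseDeriv_zero' {F : Type*} [Field F] {n : ℕ} (P : MvPolynomial (Fin n) F) :
    coeff 0 (shiftHom F n P) = P := by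
  have : (constantCoeff.comp (shiftHom F n)) = RingHom.id _ := by
    apply MvPolynomial.ringHom_ext
    · intro r; simp [shiftHom]
    · intro i; simp [shiftHom]
  exact congrArg (fun f => f P) this

theorem shift_coeff_mem_pow {F : Type*} [Field F] {n : ℕ} (a : Fin n → F) (m : ℕ) :
    ∀ R ∈ (ptIdeal a) ^ m, ∀ β : Fin n →₀ ℕ,
      coeff β (shiftHom F n R) ∈ (ptIdeal a) ^ (m - β.degree) := by
  induction m with
  | zero => intro R _ j; simp
  | succ m ih =>
    intro R hR
    rw [pow_succ] at hR
    induction hR using Submodule.mul_induction_on' with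
    | mem_mul_mem x hx y hy =>
      intro β
      rw [map_mul, coeff_mul]
      refine Ideal.sum_mem _ ?_
      rintro ⟨u, v⟩ huv
      rw [Finset.HasAntidiagonal.mem_antidiagonal] at huv
      simp only at huv ⊢
      have h1 := ih x hx u
      have hd : u.degree + v.degree = β.degree := by rw [← huv, map_add]
      by_cases hv : v = 0
      · subst hv
        rw [hasseDeriv_zero' y]
        have h3 := Ideal.mul_mem_mul h1 hy
        rw [← pow_succ] at h3
        rw [map_zero] at hd
        exact Ideal.pow_le_pow_right (by omega) h3
      · have : v.degree ≠ 0 := by simpa [Finsupp.degree_eq_zero_iff] using hv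
        exact Ideal.pow_le_pow_right (by omega) (Ideal.mul_mem_right _ _ h1)
    | add x _ y _ hx hy =>
      intro j
      rw [map_add, coeff_add]
      exact Ideal.add_mem _ (hx j) (hy j)

theorem mem_pow_of_hasse {F : Type*} [Field F] {n : ℕ} (a : Fin n → F) (m : ℕ)
    (P : MvPolynomial (Fin n) F)
    (h : ∀ β : Fin n →₀ ℕ, β.degree < m → eval a (hasseDeriv β P) = 0) :
    P ∈ (ptIdeal a) ^ m := by
  have key : ((eval₂Hom ((C : F →+* MvPolynomial (Fin n) F).comp (eval a))
      (fun i => X i - C (a i))).comp (shiftHom F n)) = RingHom.id _ := by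
    apply MvPolynomial.ringHom_ext
    · intro r; simp [shiftHom]
    · intro i; simp [shiftHom]
  have key2 := congrArg (fun f => f P) key
  simp only [RingHom.comp_apply, RingHom.id_apply, coe_eval₂Hom] at key2
  rw [← key2, eval₂_eq]
  refine Ideal.sum_mem _ fun β _ => ?_
  by_cases hβ : β.degree < m
  · have := h β hβ
    rw [hasseDeriv_eq] at this
    rw [RingHom.comp_apply, this, C_0, zero_mul]
    exact Ideal.zero_mem _
  · apply Ideal.mul_mem_left
    apply Ideal.pow_le_pow_right (not_lt.mp hβ)
    rw [Finsupp.degree_apply, ← Finset.prod_pow_eq_pow_sum]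
    apply Ideal.prod_mem_prod
    intro i _
    apply Ideal.pow_mem_pow
    rw [mem_ptIdeal]
    simp

theorem sum_degree_aux {F ι : Type*} [Field F] {n : ℕ} (s : Finset ι)
    (f : ι → MvPolynomial (Fin n) F) (d A : ℕ)
    (h : ∀ x ∈ s, f x ≠ 0 → (f x).totalDegree + d ≤ A) (h0 : ∑ x ∈ s, f x ≠ 0) :
    (∑ x ∈ s, f x).totalDegree + d ≤ A := by
  obtain ⟨x, hx, hne⟩ := Finset.exists_ne_zero_of_sum_ne_zero h0
  have hb : d ≤ A := le_trans (Nat.le_add_left _ _) (h x hx hne)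
  have : (∑ x ∈ s, f x).totalDegree ≤ A - d := by
    refine totalDegree_finsetSum_le fun x hx => ?_
    by_cases h0 : f x = 0
    · rw [h0]; simp
    · have := h x hx h0
      omega
  omega

theorem shift_degree_mul {F : Type*} [Field F] {n : ℕ} (A B : ℕ)
    (f g : MvPolynomial (Fin n) (MvPolynomial (Fin n) F))
    (hf : ∀ β, coeff β f ≠ 0 → (coeff β f).totalDegree + β.degree ≤ A)
    (hg : ∀ β, coeff β g ≠ 0 → (coeff β g).totalDegree + β.degree ≤ B) :
    ∀ β, coeff β (f * g) ≠ 0 → (coeff β (f * g)).totalDegree + β.degree ≤ A + B := by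
  classical
  intro β hβ
  rw [coeff_mul] at hβ ⊢
  refine sum_degree_aux _ _ _ _ ?_ hβ
  intro x hx hne
  have h1 := hf x.1 (left_ne_zero_of_mul hne)
  have h2 := hg x.2 (right_ne_zero_of_mul hne)
  have h3 := totalDegree_mul (coeff x.1 f) (coeff x.2 g)
  rw [Finset.HasAntidiagonal.mem_antidiagonal] at hx
  have : Finsupp.degree x.1 + Finsupp.degree x.2 = β.degree := by rw [← hx, map_add]
  omega

theorem shift_degree_X {F : Type*} [Field F] {n : ℕ} (i : Fin n) :
    ∀ β, coeff β (shiftHom F n (X i)) ≠ 0 →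
      (coeff β (shiftHom F n (X i))).totalDegree + β.degree ≤ 1 := by
  classical
  intro β hβ
  have e : shiftHom F n (X i) = C (X i) + X i := by simp [shiftHom]
  rw [e, coeff_add, coeff_C, coeff_X] at hβ ⊢
  by_cases h0 : 0 = β
  · subst h0
    have : ¬ (Finsupp.single i 1 = (0 : Fin n →₀ ℕ)) := by simp
    simp [this]
  · by_cases h1 : Finsupp.single i 1 = β
    · subst h1
      rw [if_neg h0]
      simp
    · simp [h0, h1] at hβ

theorem shift_degree_C {F : Type*} [Field F] {n : ℕ} (c : F) :
    ∀ β, coeff β (shiftHom F n (C c)) ≠ 0 →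
      (coeff β (shiftHom F n (C c))).totalDegree + β.degree ≤ 0 := by
  classical
  intro β hβ
  have e : shiftHom F n (C c) = C (C c) := by simp [shiftHom]
  rw [e, coeff_C] at hβ ⊢
  by_cases h0 : 0 = β
  · subst h0; simp
  · simp [h0] at hβ

theorem shift_degree_monomial {F : Type*} [Field F] {n : ℕ} (α : Fin n →₀ ℕ) :
    ∀ β, coeff β (shiftHom F n (monomial α 1)) ≠ 0 →
      (coeff β (shiftHom F n (monomial α 1))).totalDegree + β.degree ≤ α.degree := by
  induction α using Finsupp.induction_linear with
  | zero =>
    have := shift_degree_C (F := F) (n := n) 1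
    simpa using this
  | add α γ hα hγ =>
    have := shift_degree_mul _ _ _ _ hα hγ
    rw [← map_mul, monomial_mul, one_mul, ← map_add] at this
    exact this
  | single i e =>
    induction e with
    | zero =>
      have := shift_degree_C (F := F) (n := n) 1
      simpa using this
    | succ e ih =>
      have := shift_degree_mul _ _ _ _ ih (shift_degree_X i)
      rw [← map_mul, X, monomial_mul, one_mul, ← Finsupp.single_add] at this
      simpa using this

theorem hasse_degree {F : Type*} [Field F] {n : ℕ} (P : MvPolynomial (Fin n) F)
    (β : Fin n →₀ ℕ) (h : hasseDeriv β P ≠ 0) :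
    (hasseDeriv β P).totalDegree + β.degree ≤ P.totalDegree := by
  rw [hasseDeriv_eq] at h ⊢
  have e : coeff β (shiftHom F n P) =
      ∑ α ∈ P.support, coeff β (shiftHom F n (monomial α (coeff α P))) := by
    conv_lhs => rw [P.as_sum, map_sum, coeff_sum]
  rw [e] at h ⊢
  refine sum_degree_aux _ _ _ _ ?_ h
  intro α hα hne
  have := shift_degree_mul _ _ _ _ (shift_degree_C (F := F) (n := n) (coeff α P))
    (shift_degree_monomial α)
  rw [← map_mul, C_mul_monomial, mul_one, zero_add] at this
  refine (this β hne).trans ?_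
  exact le_totalDegree hα

theorem aeval_degree {F σ : Type*} [Field F] {n ℓ : ℕ} (f : Fin n → MvPolynomial σ F)
    (hf : ∀ i, (f i).totalDegree ≤ ℓ) (P : MvPolynomial (Fin n) F) :
    (aeval f P).totalDegree ≤ ℓ * P.totalDegree := by
  rw [aeval_def, eval₂_eq]
  refine totalDegree_finsetSum_le fun α hα => ?_
  refine (totalDegree_mul _ _).trans ?_
  rw [algebraMap_eq, totalDegree_C, zero_add]
  refine (totalDegree_finsetProd _ _).trans ?_
  have h1 : ∑ i ∈ α.support, α i ≤ P.totalDegree := le_totalDegree hα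
  calc ∑ i ∈ α.support, (f i ^ α i).totalDegree ≤ ∑ i ∈ α.support, ℓ * α i := by
        refine Finset.sum_le_sum fun i _ => (totalDegree_pow _ _).trans ?_
        rw [mul_comm]
        exact Nat.mul_le_mul_right _ (hf i)
    _ = ℓ * ∑ i ∈ α.support, α i := by rw [Finset.mul_sum]
    _ ≤ _ := Nat.mul_le_mul_left _ h1

/-- Lemma 2.7: let `2 ≤ ℓ < q`, `g ∈ F_q[x_1,…,x_{n-1}]` of degree `ℓ`, and
`C = {a + ρ(λ, g(λ)) : λ ∈ F_q^{n-1}}`. Let `k, D, M` satisfy `ℓ(D-w) < (M-w)q` for all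
`0 ≤ w < k`. If `P` is a nonzero polynomial of degree at most `D` vanishing on `C` with
multiplicity `M`, then for every `β` with `|β| < k`, the polynomial
`P_{β,ρ}(s) = P^{(β)}(a + ρ(s, g(s)))` is the zero polynomial. -/
theorem hasse_derivs_vanish_on_curve {F : Type*} [Field F] [Fintype F] (q n ℓ : ℕ)
    (hq : Fintype.card F = q) (hn : 2 ≤ n) (hℓ : 2 ≤ ℓ) (hℓq : ℓ < q)
    (g : MvPolynomial (Fin (n - 1)) F) (hg : g.totalDegree = ℓ)
    (ρ : F) (a : Fin n → F) (k D M : ℕ)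
    (hMD : ∀ w : ℕ, w < k → (ℓ : ℤ) * ((D : ℤ) - (w : ℤ)) < ((M : ℤ) - (w : ℤ)) * (q : ℤ))
    (P : MvPolynomial (Fin n) F) (hP0 : P ≠ 0) (hPD : P.totalDegree ≤ D)
    (hPC : ∀ lam : Fin (n - 1) → F, (M : ℕ∞) ≤
      mult P (fun i : Fin n => a i + ρ *
        (if hi : (i : ℕ) < n - 1 then lam ⟨i, hi⟩ else MvPolynomial.eval lam g)))
    (β : Fin n →₀ ℕ) (hβ : (∑ i : Fin n, β i) < k) :
    MvPolynomial.aeval (fun i : Fin n =>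
        MvPolynomial.C (a i) + MvPolynomial.C ρ *
          (if hi : (i : ℕ) < n - 1 then MvPolynomial.X (⟨i, hi⟩ : Fin (n - 1)) else g))
      (hasseDeriv β P) = 0 := by
  set γ : Fin n → MvPolynomial (Fin (n - 1)) F := fun i : Fin n =>
        MvPolynomial.C (a i) + MvPolynomial.C ρ *
          (if hi : (i : ℕ) < n - 1 then MvPolynomial.X (⟨i, hi⟩ : Fin (n - 1)) else g) with hγ
  by_contra hne
  have hH0 : hasseDeriv β P ≠ 0 := by
    intro h0
    rw [h0, map_zero] at hne
    exact hne rfl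
  have hdeg := hasse_degree P β hH0
  have hβd : β.degree = ∑ i : Fin n, β i := Finsupp.degree_eq_sum β
  have hγd : ∀ i, (γ i).totalDegree ≤ ℓ := by
    intro i
    refine (totalDegree_add _ _).trans (max_le (by simp) ?_)
    refine (totalDegree_mul _ _).trans ?_
    rw [totalDegree_C, zero_add]
    split_ifs with hi
    · rw [totalDegree_X]; omega
    · exact hg.le
  have hcd := aeval_degree γ hγd (hasseDeriv β P)
  have hmem : ∀ lam : Fin (n - 1) → F,
      aeval γ (hasseDeriv β P) ∈ (ptIdeal lam) ^ (M - β.degree) := by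
    intro lam
    have hpt : (fun i => eval lam (γ i)) = (fun i : Fin n => a i + ρ *
        (if hi : (i : ℕ) < n - 1 then lam ⟨i, hi⟩ else MvPolynomial.eval lam g)) := by
      funext i
      simp only [hγ, map_add, map_mul, eval_C]
      split_ifs with hi <;> simp
    have h1 : P ∈ (ptIdeal (fun i => eval lam (γ i))) ^ M := by
      apply mem_pow_of_hasse
      intro δ hδ
      have h2 := hPC lam
      rw [← hpt] at h2
      have h3 : ((∑ i, δ i : ℕ) : ℕ∞) < mult P (fun i => eval lam (γ i)) := by
        refine lt_of_lt_of_le ?_ h2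
        rw [← Finsupp.degree_eq_sum]
        exact_mod_cast hδ
      obtain ⟨N, hN, hlt⟩ := lt_sSup_iff.mp h3
      exact hN δ hlt
    have h4 := shift_coeff_mem_pow _ _ _ h1 β
    rw [← hasseDeriv_eq] at h4
    have h5 := Ideal.mem_map_of_mem (aeval γ) h4
    rw [Ideal.map_pow] at h5
    refine Ideal.pow_right_mono ?_ _ h5
    rw [Ideal.map_le_iff_le_comap]
    intro x hx
    rw [mem_ptIdeal] at hx
    rw [Ideal.mem_comap, mem_ptIdeal, ← hx]
    have hcomp : (eval lam).comp (aeval γ).toRingHom = eval (fun i => eval lam (γ i)) := by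
      apply MvPolynomial.ringHom_ext
      · intro r; simp
      · intro i; simp
    exact congrArg (fun f => f x) hcomp
  have hSZ := mult_SZ (n - 1) _ _ hne hmem
  rw [hq] at hSZ
  have hw := hMD β.degree (by omega)
  have hD : (hasseDeriv β P).totalDegree ≤ D - β.degree := by omega
  have h6 : (M - β.degree) * q ≤ ℓ * (D - β.degree) :=
    hSZ.trans (hcd.trans (Nat.mul_le_mul_left _ hD))
  have h7 : ((M : ℤ) - β.degree) ≤ ((M - β.degree : ℕ) : ℤ) := by omega
  have h8 : ((D - β.degree : ℕ) : ℤ) = (D : ℤ) - β.degree := by omega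
  zify at h6
  rw [h8] at h6
  have h9 : ((M : ℤ) - β.degree) * q ≤ ((M - β.degree : ℕ) : ℤ) * q :=
    mul_le_mul_of_nonneg_right h7 (by positivity)
  linarith
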